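/- On ℝ⁷: (e₆∧e₇)⌟⋆φ₀ = e²∧e³ + e⁴∧e⁵ and (e₆∧e₇)⌟φ₀ = −e¹ up to the sign conventions used (the paper computes (∂₆∧∂₇)⌟φ₀ = dx¹), but there exists NO vector v ∈ ℝ⁷ with v⌟φ₀ = e²∧e³ + e⁴∧e⁵. Consequently, on (ℝ⁷,φ₀) the 1-form x²dx³ + x⁴dx⁵ is coRochesterian but not Rochesterian, so the inclusion of Rochesterian 1-forms into coRochesterian 1-forms is strict in general. -/

import Mathlib

/-!
STATEMENT 14: On `ℝ⁷`: `(e₆ ∧ e₇) ⌟ ⋆φ₀ = e² ∧ e³ + e⁴ ∧ e⁵` and (with the insertion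
convention `(v₁ ∧ v₂) ⌟ α = v₂ ⌟ v₁ ⌟ α` used here, as in the paper's computation
`(∂₆ ∧ ∂₇) ⌟ φ₀ = dx¹`) `(e₆ ∧ e₇) ⌟ φ₀ = e¹`, but there exists NO vector `v ∈ ℝ⁷` with
`v ⌟ φ₀ = e² ∧ e³ + e⁴ ∧ e⁵`.  Consequently, on `(ℝ⁷, φ₀)` the 1-form
`α = x² dx³ + x⁴ dx⁵` (whose exterior derivative is the constant 2-form
`e² ∧ e³ + e⁴ ∧ e⁵`) is coRochesterian but not Rochesterian, so the inclusion of
Rochesterian 1-forms into coRochesterian 1-forms is strict in general.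
(All indices are 1-based in this description and 0-based in the code below.)
-/

noncomputable section

open scoped BigOperators Matrix

/-- `ℝ⁷`. -/
abbrev V7 : Type := Fin 7 → ℝ

/-- The basis exterior `k`-form `e^{i₁ ⋯ i_k}` on `ℝ⁷`. -/
def eForm {k : ℕ} (idx : Fin k → Fin 7) : AlternatingMap ℝ V7 ℝ (Fin k) :=
  (Matrix.detRowAlternating (R := ℝ) (n := Fin k)).compLinearMap
    (LinearMap.pi fun t => LinearMap.proj (idx t))

/-- The standard `G₂` 3-form `φ₀` (0-based indices). -/
def phi0 : AlternatingMap ℝ V7 ℝ (Fin 3) :=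
  eForm ![0, 1, 2] + eForm ![0, 3, 4] + eForm ![0, 5, 6] + eForm ![1, 3, 5]
    - eForm ![1, 4, 6] - eForm ![2, 3, 6] - eForm ![2, 4, 5]

/-- The Hodge dual 4-form `⋆φ₀` (0-based indices). -/
def psi0 : AlternatingMap ℝ V7 ℝ (Fin 4) :=
  eForm ![3, 4, 5, 6] + eForm ![1, 2, 5, 6] + eForm ![1, 2, 3, 4] + eForm ![0, 2, 4, 6]
    - eForm ![0, 2, 3, 5] - eForm ![0, 1, 4, 5] - eForm ![0, 1, 3, 6]

/-- The `i`-th standard basis vector of `ℝ⁷`. -/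
def e7 (i : Fin 7) : V7 := Pi.single i 1

/-- Contraction `Q ⌟ α` of an `(l+2)`-form `α` by the 2-multivector with antisymmetric
coefficient matrix `a`; `(X ∧ Y) ⌟ α = Y ⌟ X ⌟ α = α (X, Y, ·, …, ·)`. -/
def contr2 {l : ℕ} (a : Matrix (Fin 7) (Fin 7) ℝ) (α : AlternatingMap ℝ V7 ℝ (Fin (l + 2))) :
    AlternatingMap ℝ V7 ℝ (Fin l) :=
  (1 / 2 : ℝ) • ∑ i : Fin 7, ∑ j : Fin 7, a i j • ((α.curryLeft (e7 i)).curryLeft (e7 j))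

/-- The 1-form `α = x² dx³ + x⁴ dx⁵` on `ℝ⁷` (0-based: `α_x(w) = x 1 * w 2 + x 3 * w 4`). -/
def alpha14 (x : V7) (w : V7) : ℝ := x 1 * w 2 + x 3 * w 4

/-- The exterior derivative of a 1-form `α` on the vector space `ℝ⁷`, as a function:
`(dα)_x (u, v) = D_u (α_·(v))(x) − D_v (α_·(u))(x)`. -/
def dOneForm (α : V7 → V7 → ℝ) (x u v : V7) : ℝ :=
  fderiv ℝ (fun y => α y v) x u - fderiv ℝ (fun y => α y u) x v

theorem eForm_apply' {k : ℕ} (idx : Fin k → Fin 7) (v : Fin k → V7) :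
    eForm idx v = Matrix.det (Matrix.of fun i j => v i (idx j)) := rfl

theorem psi_contr (u : Fin 2 → V7) :
    psi0 ![e7 5, e7 6, u 0, u 1] = u 0 1 * u 1 2 - u 0 2 * u 1 1 + (u 0 3 * u 1 4 - u 0 4 * u 1 3) := by
  simp [psi0, eForm_apply', e7, Matrix.det_succ_row_zero, Fin.sum_univ_succ, Fin.succAbove,
    Pi.single_apply]
  ring

theorem phi_apply (a b c : V7) :
    phi0 ![a, b, c] =
      (Matrix.det !![a 0, a 1, a 2; b 0, b 1, b 2; c 0, c 1, c 2])
      + (Matrix.det !![a 0, a 3, a 4; b 0, b 3, b 4; c 0, c 3, c 4])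
      + (Matrix.det !![a 0, a 5, a 6; b 0, b 5, b 6; c 0, c 5, c 6])
      + (Matrix.det !![a 1, a 3, a 5; b 1, b 3, b 5; c 1, c 3, c 5])
      - (Matrix.det !![a 1, a 4, a 6; b 1, b 4, b 6; c 1, c 4, c 6])
      - (Matrix.det !![a 2, a 3, a 6; b 2, b 3, b 6; c 2, c 3, c 6])
      - (Matrix.det !![a 2, a 4, a 5; b 2, b 4, b 5; c 2, c 4, c 5]) := by
  simp [phi0, eForm_apply', Matrix.det_fin_three]

theorem two_apply (u : Fin 2 → V7) :
    (eForm ![1, 2] + eForm ![3, 4]) u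
      = u 0 1 * u 1 2 - u 0 2 * u 1 1 + (u 0 3 * u 1 4 - u 0 4 * u 1 3) := by
  simp [eForm_apply', Matrix.det_fin_two]

theorem alt_sum_apply {k : ℕ} (f : Fin 7 → AlternatingMap ℝ V7 ℝ (Fin k)) (m : Fin k → V7) :
    (∑ i, f i) m = ∑ i, f i m :=
  map_sum (⟨⟨fun g => g m, rfl⟩, fun _ _ => rfl⟩ : AlternatingMap ℝ V7 ℝ (Fin k) →+ ℝ) f Finset.univ

theorem psi_part :
    (psi0.curryLeft (e7 5)).curryLeft (e7 6) = eForm ![1, 2] + eForm ![3, 4] := by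
  ext u
  rw [two_apply, ← psi_contr]
  simp only [AlternatingMap.curryLeft_apply_apply]
  congr 1
  funext i
  fin_cases i <;> rfl

theorem phi_part : (phi0.curryLeft (e7 5)).curryLeft (e7 6) = eForm ![0] := by
  ext u
  have h : u = ![u 0] := by
    funext i
    fin_cases i
    rfl
  simp only [AlternatingMap.curryLeft_apply_apply]
  rw [h, phi_apply]
  simp [eForm_apply', e7, Matrix.det_fin_three]

theorem d_alpha (x u v : V7) :
    dOneForm alpha14 x u v = (eForm ![1, 2] + eForm ![3, 4]) ![u, v] := by
  have key : ∀ w z : V7, fderiv ℝ (fun y => alpha14 y w) x z = z 1 * w 2 + z 3 * w 4 := by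
    intro w z
    have h : HasFDerivAt (fun y : V7 => alpha14 y w)
        ((w 2) • (ContinuousLinearMap.proj (R := ℝ) (φ := fun _ : Fin 7 => ℝ) 1)
          + (w 4) • (ContinuousLinearMap.proj (R := ℝ) (φ := fun _ : Fin 7 => ℝ) 3)) x :=
      ((hasFDerivAt_apply (𝕜 := ℝ) (1 : Fin 7) x).mul_const (w 2)).add
        ((hasFDerivAt_apply (𝕜 := ℝ) (3 : Fin 7) x).mul_const (w 4))
    rw [h.fderiv]
    simp
    ring
  rw [two_apply, dOneForm, key, key]
  simp
  ring

theorem no_vec (w : V7) (h : ∀ u v : V7, (eForm ![1, 2] + eForm ![3, 4]) ![u, v]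
    = phi0.curryLeft w ![u, v]) : False := by
  have h1 := h (e7 1) (e7 2)
  have h2 := h (e7 5) (e7 6)
  rw [two_apply, AlternatingMap.curryLeft_apply_apply, phi_apply] at h1 h2
  simp [e7, Matrix.det_fin_three] at h1 h2
  linarith

theorem coRochesterian_not_Rochesterian :
    -- `(e₆ ∧ e₇) ⌟ ⋆φ₀ = e² ∧ e³ + e⁴ ∧ e⁵`
    ((psi0.curryLeft (e7 5)).curryLeft (e7 6) = eForm ![1, 2] + eForm ![3, 4]) ∧
    -- `(e₆ ∧ e₇) ⌟ φ₀ = e¹`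
    ((phi0.curryLeft (e7 5)).curryLeft (e7 6) = eForm ![0]) ∧
    -- there is no vector `v` with `v ⌟ φ₀ = e² ∧ e³ + e⁴ ∧ e⁵`
    (∀ v : V7, phi0.curryLeft v ≠ eForm ![1, 2] + eForm ![3, 4]) ∧
    -- `dα = e² ∧ e³ + e⁴ ∧ e⁵` for `α = x² dx³ + x⁴ dx⁵`
    (∀ x u v : V7, dOneForm alpha14 x u v = (eForm ![1, 2] + eForm ![3, 4]) ![u, v]) ∧
    -- `α` is coRochesterian: `dα = Q ⌟ ⋆φ₀` for some 2-multivector field `Q`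
    (∃ a : V7 → Matrix (Fin 7) (Fin 7) ℝ, (∀ x, (a x)ᵀ = -(a x)) ∧
      ∀ x u v : V7, dOneForm alpha14 x u v = contr2 (a x) psi0 ![u, v]) ∧
    -- but `α` is not Rochesterian: there is no vector field `X` with `dα = X ⌟ φ₀`
    ¬ (∃ X : V7 → V7, ∀ x u v : V7, dOneForm alpha14 x u v = phi0.curryLeft (X x) ![u, v]) := by
  refine ⟨psi_part, phi_part, fun v hv => no_vec v fun a b => by rw [hv], d_alpha, ?_, ?_⟩
  · refine ⟨fun _ => Matrix.single 5 6 1 - Matrix.single 6 5 1, fun _ => ?_, fun x u v => ?_⟩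
    · simp [Matrix.transpose_sub, Matrix.transpose_single]
    · rw [d_alpha]
      have anti : (psi0.curryLeft (e7 6)).curryLeft (e7 5)
          = -(psi0.curryLeft (e7 5)).curryLeft (e7 6) := by
        ext m
        have hs := psi0.map_swap (Matrix.vecCons (e7 5) (Matrix.vecCons (e7 6) m))
          (i := 0) (j := 1) (by decide)
        simp only [AlternatingMap.neg_apply, AlternatingMap.curryLeft_apply_apply]
        rw [← hs]
        congr 1
        funext i
        fin_cases i <;> rfl
      have hc : contr2 (Matrix.single 5 6 1 - Matrix.single 6 5 1) psi0
          = (psi0.curryLeft (e7 5)).curryLeft (e7 6) := by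
        ext m
        have am := congrArg (fun f => f m) anti
        simp only [AlternatingMap.neg_apply] at am
        have hm : contr2 (Matrix.single 5 6 1 - Matrix.single 6 5 1) psi0 m
            = (1 / 2 : ℝ) * ∑ i : Fin 7, ∑ j : Fin 7,
              (Matrix.single 5 6 1 - Matrix.single 6 5 1 : Matrix (Fin 7) (Fin 7) ℝ) i j *
                ((psi0.curryLeft (e7 i)).curryLeft (e7 j)) m := by
          simp only [contr2, AlternatingMap.smul_apply, alt_sum_apply, smul_eq_mul]
        rw [hm]
        simp only [Matrix.sub_apply, sub_mul, Finset.sum_sub_distrib, Matrix.single_apply,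
          ite_and, ite_mul, one_mul, zero_mul, Finset.sum_ite_eq, Finset.sum_ite_irrel,
          Finset.sum_const_zero, Finset.mem_univ, if_true]
        rw [am]
        ring
      rw [hc, psi_part]
  · rintro ⟨X, hX⟩
    exact no_vec (X 0) fun u v => by rw [← hX 0 u v, d_alpha]

end
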